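/- Let s₁ ∈ (0,1), let J be an open subinterval of (s₁^((q−1)/(p−1)), 1), and let t : J → ℝ be differentiable and such that for every s₂ ∈ J one has 1 ≤ t(s₂), τ(s₂) := τ(s₁,s₂,t(s₂)) ∈ (0,1), and (s₁, s₂, t(s₂)) satisfies the defining equation. Then for every s₂ ∈ J: t′(s₂)·(p−q)·t(s₂)^(p−q−1)·Δ₁(s₂) = (s₁/s₂²)·F(τ(s₂)) − (p−q)·(s₁/s₂)·(ω_q(s₂)/((q−1)(ω_q(s₂)−1)) + ω_q(s₂)^q/s₂), where Δ₁(s₂) := q·(p − (p−1)·ω_q(τ(s₂)))·ω_q(τ(s₂))^(q−1) + (p − (q(p−1)/(q−1))·ω_q(τ(s₂)))·(τ(s₂) − t(s₂)^q)/(ω_q(τ(s₂)) − 1). -/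

import Mathlib

noncomputable section

open Real Set

/-- `H r z = r·z^(r-1) - (r-1)·z^r`. -/
def H (r z : ℝ) : ℝ := r * z ^ (r - 1) - (r - 1) * z ^ r

/-- `ω` is the inverse of `H r`, mapping `(0,1]` into `[1, r/(r-1))`,
    so that `H r (ω s) = s` for `s ∈ (0,1]`. -/
def IsOmega (r : ℝ) (ω : ℝ → ℝ) : Prop :=
  ∀ s ∈ Set.Ioc (0 : ℝ) 1, ω s ∈ Set.Ico (1 : ℝ) (r / (r - 1)) ∧ H r (ω s) = s

/-- `τ(s₁,s₂,t) = ((p-q)/p)·(t^p - s₁)/(t^(p-q) - s₁/s₂)`. -/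
def tau (p q s₁ s₂ t : ℝ) : ℝ :=
  ((p - q) / p) * ((t ^ p - s₁) / (t ^ (p - q) - s₁ / s₂))

/-- `F(τ)` from the paper, where `ω` plays the role of `ω_q`. -/
def Ffun (p q : ℝ) (ω : ℝ → ℝ) (τ : ℝ) : ℝ :=
  (τ / (1 - ω τ)) * (p - (q * (p - 1) / (q - 1)) * ω τ)
    - q * (p * ω τ ^ (q - 1) - (p - 1) * ω τ ^ q)

/-- `A(s)` from the paper, where `ω` plays the role of `ω_q`. -/
def Afun (q : ℝ) (ω : ℝ → ℝ) (s : ℝ) : ℝ :=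
  s * (ω s / ((q - 1) * (ω s - 1)) + ω s ^ q / s)

theorem rpow_eq_rpow_sub_two_mul_sq {z : ℝ} (hz : 0 < z) (r : ℝ) :
    z ^ r = z ^ (r - 2) * z ^ 2 := by
  rw [← rpow_natCast z 2, ← rpow_add hz]
  norm_num

theorem rpow_sub_one_eq_rpow_sub_two_mul {z : ℝ} (hz : 0 < z) (r : ℝ) :
    z ^ (r - 1) = z ^ (r - 2) * z := by
  rw [← rpow_add_one hz.ne']
  ring_nf

theorem hasStrictDerivAt_H (r : ℝ) {z : ℝ} (hz : 0 < z) :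
    HasStrictDerivAt (H r) (r * (r - 1) * z ^ (r - 2) * (1 - z)) z := by
  have h := ((hasStrictDerivAt_rpow_const_of_ne hz.ne' (r - 1)).const_mul r).sub
    ((hasStrictDerivAt_rpow_const_of_ne hz.ne' r).const_mul (r - 1))
  refine h.congr_deriv ?_
  rw [rpow_sub_one_eq_rpow_sub_two_mul hz r, show r - 1 - 1 = r - 2 by ring]
  ring

theorem strictAntiOn_H {r : ℝ} (hr : 1 < r) : StrictAntiOn (H r) (Ici 1) := by
  refine strictAntiOn_of_deriv_neg (convex_Ici 1)
    (fun z hz => ?_) (fun z hz => ?_)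
  · have hd := (hasStrictDerivAt_H r (zero_lt_one.trans_le hz)).hasDerivAt
    exact hd.continuousAt.continuousWithinAt
  · rw [interior_Ici, mem_Ioi] at hz
    have hz0 : 0 < z := zero_lt_one.trans hz
    rw [(hasStrictDerivAt_H r hz0).hasDerivAt.deriv]
    have h1 : 0 < r * (r - 1) * z ^ (r - 2) :=
      mul_pos (mul_pos (by linarith) (by linarith)) (rpow_pos_of_pos hz0 _)
    exact mul_neg_of_pos_of_neg h1 (by linarith)

theorem IsOmega.one_lt {r : ℝ} {ω : ℝ → ℝ} (hω : IsOmega r ω) {s : ℝ}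
    (hs : s ∈ Ioo (0 : ℝ) 1) : 1 < ω s := by
  obtain ⟨⟨h1, -⟩, h2⟩ := hω s ⟨hs.1, hs.2.le⟩
  refine lt_of_le_of_ne h1 fun h => hs.2.ne ?_
  rw [← h2, ← h]
  simp [H]

theorem IsOmega.hasDerivAt {r : ℝ} (hr : 1 < r) {ω : ℝ → ℝ} (hω : IsOmega r ω) {s : ℝ}
    (hs : s ∈ Ioo (0 : ℝ) 1) :
    HasDerivAt ω (r * (r - 1) * ω s ^ (r - 2) * (1 - ω s))⁻¹ s := by
  have h1 := hω.one_lt hs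
  have h0 : 0 < ω s := zero_lt_one.trans h1
  have hH : H r (ω s) = s := (hω s ⟨hs.1, hs.2.le⟩).2
  have hd := hasStrictDerivAt_H r h0
  have hne : r * (r - 1) * ω s ^ (r - 2) * (1 - ω s) ≠ 0 :=
    mul_ne_zero (mul_ne_zero (mul_ne_zero (by linarith) (by linarith))
      (rpow_pos_of_pos h0 _).ne') (by linarith)
  have hinv : ∀ᶠ z in nhds (ω s), ω (H r z) = z := by
    have hmem : ∀ᶠ z in nhds (ω s), H r z ∈ Ioo (0 : ℝ) 1 :=
      hd.hasDerivAt.continuousAt.eventually_mem (isOpen_Ioo.mem_nhds (by rwa [hH]))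
    filter_upwards [hmem, lt_mem_nhds h1] with z hz hz1
    obtain ⟨⟨h3, -⟩, h4⟩ := hω (H r z) ⟨hz.1, hz.2.le⟩
    exact (strictAntiOn_H hr).injOn h3 hz1.le h4
  simpa only [hH] using (hd.to_local_left_inverse hne hinv).hasDerivAt

theorem HasDerivAt.rpow_const_sub_const_div {s₁ s t' : ℝ} {t : ℝ → ℝ} (r : ℝ)
    (ht : HasDerivAt t t' s) (ht0 : t s ≠ 0) (hs : s ≠ 0) :
    HasDerivAt (fun x => t x ^ r - s₁ / x) (t' * r * t s ^ (r - 1) + s₁ / s ^ 2) s := by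
  refine ((ht.rpow_const (p := r) (Or.inl ht0)).sub
    ((hasDerivAt_inv hs).const_mul s₁)).congr_deriv ?_
  ring

theorem HasDerivAt.tau {p q s₁ s t' : ℝ} {t : ℝ → ℝ} (hp : p ≠ 0) (hs : s ≠ 0)
    (ht : HasDerivAt t t' s) (ht0 : 0 < t s) (hD : t s ^ (p - q) - s₁ / s ≠ 0) :
    HasDerivAt (fun x => tau p q s₁ x (t x))
      (((t s ^ q - tau p q s₁ s (t s)) * (t' * (p - q) * t s ^ (p - q - 1))
        - tau p q s₁ s (t s) * (s₁ / s ^ 2)) / (t s ^ (p - q) - s₁ / s)) s := by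
  have hDd := ht.rpow_const_sub_const_div (s₁ := s₁) (p - q) ht0.ne' hs
  refine ((((ht.rpow_const (p := p) (Or.inl ht0.ne')).sub_const s₁).div hDd hD).const_mul
    ((p - q) / p)).congr_deriv ?_
  have hpow : t s ^ (p - 1) = t s ^ (p - q - 1) * t s ^ q := by
    rw [← rpow_add ht0]
    ring_nf
  rw [hpow, _root_.tau]
  generalize t s ^ (p - q) - s₁ / s = D at hD
  field_simp
  ring

/-- the differentiated identity (2.10):
`t′(s₂)·(p−q)·t(s₂)^(p−q−1)·Δ₁(s₂)
  = (s₁/s₂²)·F(τ(s₂)) − (p−q)·(s₁/s₂)·(ω_q(s₂)/((q−1)(ω_q(s₂)−1)) + ω_q(s₂)^q/s₂)`. -/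
theorem stmt_14 (p q : ℝ) (hq : 1 < q) (hqp : q < p)
    (ωq : ℝ → ℝ) (hωq : IsOmega q ωq)
    (s₁ : ℝ) (hs₁ : s₁ ∈ Set.Ioo (0 : ℝ) 1)
    (a b : ℝ) (hJ : Set.Ioo a b ⊆ Set.Ioo (s₁ ^ ((q - 1) / (p - 1))) 1)
    (t : ℝ → ℝ)
    (hdiff : ∀ s₂ ∈ Set.Ioo a b, DifferentiableAt ℝ t s₂)
    (hrange : ∀ s₂ ∈ Set.Ioo a b, 1 ≤ t s₂)
    (htau : ∀ s₂ ∈ Set.Ioo a b, tau p q s₁ s₂ (t s₂) ∈ Set.Ioo (0 : ℝ) 1)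
    (heq : ∀ s₂ ∈ Set.Ioo a b,
      q * (p * ωq (tau p q s₁ s₂ (t s₂)) ^ (q - 1)
            - (p - 1) * ωq (tau p q s₁ s₂ (t s₂)) ^ q)
          * (t s₂ ^ (p - q) - s₁ / s₂)
        = (p - q) * s₁ * (ωq s₂ ^ q / s₂ - 1)) :
    ∀ s₂ ∈ Set.Ioo a b,
      deriv t s₂ * (p - q) * t s₂ ^ (p - q - 1)
          * (q * (p - (p - 1) * ωq (tau p q s₁ s₂ (t s₂)))
                * ωq (tau p q s₁ s₂ (t s₂)) ^ (q - 1)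
              + (p - (q * (p - 1) / (q - 1)) * ωq (tau p q s₁ s₂ (t s₂)))
                * (tau p q s₁ s₂ (t s₂) - t s₂ ^ q)
                / (ωq (tau p q s₁ s₂ (t s₂)) - 1))
        = (s₁ / s₂ ^ 2) * Ffun p q ωq (tau p q s₁ s₂ (t s₂))
          - (p - q) * (s₁ / s₂)
            * (ωq s₂ / ((q - 1) * (ωq s₂ - 1)) + ωq s₂ ^ q / s₂) := by
  intro s hs
  have hs0 : 0 < s := (rpow_nonneg hs₁.1.le _).trans_lt (hJ hs).1
  have hs1 : s < 1 := (hJ hs).2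
  have ht0 : 0 < t s := zero_lt_one.trans_le (hrange s hs)
  have hD : t s ^ (p - q) - s₁ / s ≠ 0 := fun h => by
    have := (htau s hs).1
    simp [tau, h] at this
  have ht := (hdiff s hs).hasDerivAt
  have hτ := ht.tau (s₁ := s₁) (p := p) (q := q) (by linarith) hs0.ne' ht0 hD
  have hDd := ht.rpow_const_sub_const_div (s₁ := s₁) (p - q) ht0.ne' hs0.ne'
  have hwτ := (hωq.hasDerivAt hq (htau s hs)).comp s hτ
  have hτ1 := hωq.one_lt (htau s hs)
  have hw := hωq.hasDerivAt hq ⟨hs0, hs1⟩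
  have hw1 := hωq.one_lt ⟨hs0, hs1⟩
  have hτ0 := zero_lt_one.trans hτ1
  have hw0 := zero_lt_one.trans hw1
  have hL := ((((hwτ.rpow_const (p := q - 1) (Or.inl hτ0.ne')).const_mul p).sub
    ((hwτ.rpow_const (p := q) (Or.inl hτ0.ne')).const_mul (p - 1))).const_mul q).mul hDd
  have hR := (((hw.rpow_const (p := q) (Or.inl hw0.ne')).div (hasDerivAt_id s)
    hs0.ne').sub_const 1).const_mul ((p - q) * s₁)
  have key := hL.unique (hR.congr_of_eventuallyEq
    (Filter.eventually_of_mem (isOpen_Ioo.mem_nhds hs) heq))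
  simp only [Function.comp_apply, Pi.sub_apply, id, show q - 1 - 1 = q - 2 by ring,
    rpow_sub_one_eq_rpow_sub_two_mul hτ0 q, rpow_sub_one_eq_rpow_sub_two_mul hw0 q,
    rpow_eq_rpow_sub_two_mul_sq hτ0 q, rpow_eq_rpow_sub_two_mul_sq hw0 q] at key
  simp only [Ffun, rpow_sub_one_eq_rpow_sub_two_mul hτ0 q,
    rpow_eq_rpow_sub_two_mul_sq hτ0 q, rpow_eq_rpow_sub_two_mul_sq hw0 q]
  have hvp : 0 < ωq (tau p q s₁ s (t s)) ^ (q - 2) := rpow_pos_of_pos hτ0 _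
  have hwp : 0 < ωq s ^ (q - 2) := rpow_pos_of_pos hw0 _
  generalize ωq (tau p q s₁ s (t s)) ^ (q - 2) = V at *
  generalize ωq s ^ (q - 2) = W at *
  generalize ωq (tau p q s₁ s (t s)) = v at *
  generalize ωq s = w at *
  generalize tau p q s₁ s (t s) = T at *
  generalize t s ^ (p - q) - s₁ / s = D at *
  generalize t s ^ q = E at *
  generalize deriv t s * (p - q) * t s ^ (p - q - 1) = u at *
  have hq1 : q - 1 ≠ 0 := by linarith
  have hq0 : q ≠ 0 := by linarith
  have hv1 : 1 - v ≠ 0 := by linarith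
  have hww1 : 1 - w ≠ 0 := by linarith
  rw [← neg_sub 1 v, ← neg_sub 1 w]
  field_simp at key ⊢
  linear_combination key
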